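/- One has θ1i∧θ1i − 2·θ0j∧θ2j − 2·θ0k∧θ2k − θs∧θs = 0, and the identities obtained by cyclically permuting (i,j,k) hold as well. -/

import Mathlib

/-!
The identities are equalities of 4-forms, so it suffices to write both sides in terms of the
monomials `e8 i * e8 j * e8 k * e8 l` with increasing indices. The only relations needed are that the
generators square to zero (`e8_sq`) and anticommute (`e8_swap`). Oriented so that they move smaller
indices to the left, and supplemented by `e8_swap_assoc`, which acts inside a right-associated product,
they form a terminating rewriting system that puts every monomial in this normal form; the
coefficients then cancel additively.
-/

noncomputable section

open ExteriorAlgebra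

/-- Basis 1-forms of the dual of `ℝ^8`, modelled as generators of the exterior algebra of an
8-dimensional real vector space. -/
def e8 (i : Fin 8) : ExteriorAlgebra ℝ (Fin 8 → ℝ) :=
  ExteriorAlgebra.ι ℝ (Pi.single i 1)

def dx1 : ExteriorAlgebra ℝ (Fin 8 → ℝ) := e8 0
def dx2 : ExteriorAlgebra ℝ (Fin 8 → ℝ) := e8 1
def dx3 : ExteriorAlgebra ℝ (Fin 8 → ℝ) := e8 2
def dx4 : ExteriorAlgebra ℝ (Fin 8 → ℝ) := e8 3
def dy1 : ExteriorAlgebra ℝ (Fin 8 → ℝ) := e8 4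
def dy2 : ExteriorAlgebra ℝ (Fin 8 → ℝ) := e8 5
def dy3 : ExteriorAlgebra ℝ (Fin 8 → ℝ) := e8 6
def dy4 : ExteriorAlgebra ℝ (Fin 8 → ℝ) := e8 7

def θ0i : ExteriorAlgebra ℝ (Fin 8 → ℝ) := dy1 * dy2 - dy3 * dy4
def θ0j : ExteriorAlgebra ℝ (Fin 8 → ℝ) := dy1 * dy3 + dy2 * dy4
def θ0k : ExteriorAlgebra ℝ (Fin 8 → ℝ) := dy1 * dy4 - dy2 * dy3
def θ1i : ExteriorAlgebra ℝ (Fin 8 → ℝ) := dy1 * dx2 - dy2 * dx1 + dy4 * dx3 - dy3 * dx4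
def θ1j : ExteriorAlgebra ℝ (Fin 8 → ℝ) := dy1 * dx3 + dy2 * dx4 - dy3 * dx1 - dy4 * dx2
def θ1k : ExteriorAlgebra ℝ (Fin 8 → ℝ) := dy1 * dx4 - dy4 * dx1 + dy3 * dx2 - dy2 * dx3
def θ2i : ExteriorAlgebra ℝ (Fin 8 → ℝ) := dx1 * dx2 - dx3 * dx4
def θ2j : ExteriorAlgebra ℝ (Fin 8 → ℝ) := dx1 * dx3 + dx2 * dx4
def θ2k : ExteriorAlgebra ℝ (Fin 8 → ℝ) := dx1 * dx4 - dx2 * dx3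
def θs : ExteriorAlgebra ℝ (Fin 8 → ℝ) := -(dy1 * dx1 + dy2 * dx2 + dy3 * dx3 + dy4 * dx4)

theorem e8_sq (i : Fin 8) : e8 i * e8 i = 0 :=
  ExteriorAlgebra.ι_sq_zero _

/-- Anticommutativity of the generators. The hypothesis `i < j` orients the equation, so that
rewriting with it sorts the factors by index. -/
theorem e8_swap {i j : Fin 8} (_h : i < j) : e8 j * e8 i = -(e8 i * e8 j) :=
  eq_neg_of_add_eq_zero_left (ExteriorAlgebra.ι_add_mul_swap _ _)

theorem e8_swap_assoc {i j : Fin 8} (h : i < j) (z : ExteriorAlgebra ℝ (Fin 8 → ℝ)) :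
    e8 j * (e8 i * z) = -(e8 i * (e8 j * z)) := by
  rw [← mul_assoc, e8_swap h, neg_mul, mul_assoc]

theorem theta1_squared_relation :
    θ1i * θ1i - 2 * (θ0j * θ2j) - 2 * (θ0k * θ2k) - θs * θs = 0 ∧
    θ1j * θ1j - 2 * (θ0k * θ2k) - 2 * (θ0i * θ2i) - θs * θs = 0 ∧
    θ1k * θ1k - 2 * (θ0i * θ2i) - 2 * (θ0j * θ2j) - θs * θs = 0 := by
  refine ⟨?_, ?_, ?_⟩ <;>
  · simp only [θ0i, θ0j, θ0k, θ1i, θ1j, θ1k, θ2i, θ2j, θ2k, θs,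
      dx1, dx2, dx3, dx4, dy1, dy2, dy3, dy4, two_mul]
    simp (discharger := decide) only [mul_add, add_mul, mul_sub, sub_mul, mul_neg, neg_mul,
      neg_neg, mul_assoc, mul_zero, neg_zero, e8_sq, e8_swap, e8_swap_assoc]
    abel

end
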